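/- Let f, g : (0,1) → ℝ be integrable with λ(|f|)·λ(|g|) integrable on (0,1). Then f·g ∈ L¹(0,1) and ∫₀¹ λ(s; f)·λ̌(s; g) ds ≤ ∫₀¹ f·g dm ≤ ∫₀¹ λ(s; f)·λ(s; g) ds, where λ̌(t; g) = λ((1−t)⁻; g) is the increasing rearrangement. -/

import Mathlib

open MeasureTheory Set

/-- The decreasing rearrangement (spectral scale) of `f` on `(0,1)`. -/
noncomputable def rr (f : ℝ → ℝ) (t : ℝ) : ℝ :=
  sInf {s : ℝ | volume {u ∈ Ioo (0:ℝ) 1 | s < f u} ≤ ENNReal.ofReal t}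

/-- Hardy–Littlewood–Pólya majorisation `g ≺ f` on `(0,1)`. -/
def Maj (g f : ℝ → ℝ) : Prop :=
  (∀ s ∈ Ico (0:ℝ) 1, (∫ t in Ioo (0:ℝ) s, rr g t) ≤ ∫ t in Ioo (0:ℝ) s, rr f t) ∧
    (∫ t in Ioo (0:ℝ) 1, rr g t) = ∫ t in Ioo (0:ℝ) 1, rr f t

/-- The orbit `Ω(y)` of all integrable functions on `(0,1)` majorised by `y`. -/
def Omega (y : ℝ → ℝ) : Set (ℝ → ℝ) :=
  {x | IntegrableOn x (Ioo (0:ℝ) 1) ∧ Maj x y}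

/-- `x` is an extreme point of the convex set `Ω` (functions identified a.e. on `(0,1)`). -/
def ExtremePt (Ω : Set (ℝ → ℝ)) (x : ℝ → ℝ) : Prop :=
  x ∈ Ω ∧ ∀ x₁ ∈ Ω, ∀ x₂ ∈ Ω,
    (∀ᵐ u ∂(volume.restrict (Ioo (0:ℝ) 1)), x u = (x₁ u + x₂ u) / 2) →
    (∀ᵐ u ∂(volume.restrict (Ioo (0:ℝ) 1)), x₁ u = x₂ u)

/-- The increasing rearrangement `λ̌(t; f) = λ((1−t)⁻; f)`, the left limit of the
decreasing rearrangement at `1 - t` (for a decreasing function this is the infimum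
of its values on `(0, 1-t)`). -/
noncomputable def rrCheck (f : ℝ → ℝ) (t : ℝ) : ℝ :=
  sInf (rr f '' Ioo (0:ℝ) (1 - t))

open ProbabilityTheory Filter Topology
open scoped ENNReal

local notation "μ₀" => (volume.restrict (Ioo (0:ℝ) 1) : Measure ℝ)

instance isProbabilityMeasure_restrict_Ioo_zero_one : IsProbabilityMeasure μ₀ := ⟨by simp⟩

lemma volume_sep_eq_restrict (f : ℝ → ℝ) (s : ℝ) :
    volume {u ∈ Ioo (0:ℝ) 1 | s < f u} = μ₀ {u | s < f u} := by
  rw [Measure.restrict_apply' measurableSet_Ioo, inter_comm]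
  rfl

lemma measure_lt_eq_cdf {f : ℝ → ℝ} (hf : AEMeasurable f μ₀) (s : ℝ) :
    μ₀ {u | s < f u} = ENNReal.ofReal (1 - cdf (Measure.map f μ₀) s) := by
  have := Measure.isProbabilityMeasure_map hf
  have h1 : μ₀ {u | s < f u} = Measure.map f μ₀ (Ioi s) := by
    rw [Measure.map_apply_of_aemeasurable hf measurableSet_Ioi]
    rfl
  rw [h1, ENNReal.ofReal_sub _ (cdf_nonneg _ _), ofReal_cdf, ENNReal.ofReal_one, ← compl_Iic,
    prob_compl_eq_one_sub measurableSet_Iic]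

lemma rr_le_iff {f : ℝ → ℝ} (hf : AEMeasurable f μ₀) {t : ℝ} (ht : t ∈ Ioo (0:ℝ) 1) (s : ℝ) :
    rr f t ≤ s ↔ μ₀ {u | s < f u} ≤ ENNReal.ofReal t := by
  have := Measure.isProbabilityMeasure_map hf
  set c := cdf (Measure.map f μ₀)
  have key : ∀ s, μ₀ {u | s < f u} ≤ ENNReal.ofReal t ↔ 1 - t ≤ c s := fun s => by
    rw [measure_lt_eq_cdf hf, ENNReal.ofReal_le_ofReal_iff ht.1.le, sub_le_comm]
  have hset : rr f t = sInf {s | 1 - t ≤ c s} := by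
    unfold rr
    simp_rw [volume_sep_eq_restrict, key]
  have hne : {s | 1 - t ≤ c s}.Nonempty :=
    ((tendsto_cdf_atTop (Measure.map f μ₀)).eventually
      (eventually_ge_nhds (show 1 - t < 1 by linarith [ht.1]))).exists
  have hbdd : BddBelow {s | 1 - t ≤ c s} := by
    obtain ⟨b, hb⟩ := ((tendsto_cdf_atBot (Measure.map f μ₀)).eventually
      (eventually_lt_nhds (show 0 < 1 - t by linarith [ht.2]))).exists
    refine ⟨b, fun s hs => ?_⟩
    by_contra! h
    exact absurd (hs.trans (c.mono h.le)) (not_le.2 hb)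
  rw [key, hset]
  refine ⟨fun h => ?_, fun h => csInf_le hbdd h⟩
  refine ge_of_tendsto ((c.right_continuous s).mono Ioi_subset_Ici_self)
    (eventually_nhdsWithin_of_forall fun x hx => ?_)
  obtain ⟨y, hy, hyx⟩ := exists_lt_of_csInf_lt hne (h.trans_lt hx)
  exact hy.trans (c.mono hyx.le)

lemma lt_rr_iff {f : ℝ → ℝ} (hf : AEMeasurable f μ₀) {t : ℝ} (ht : t ∈ Ioo (0:ℝ) 1) (s : ℝ) :
    s < rr f t ↔ ENNReal.ofReal t < μ₀ {u | s < f u} := by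
  rw [← not_le, rr_le_iff hf ht, not_le]

lemma antitoneOn_rr {f : ℝ → ℝ} (hf : AEMeasurable f μ₀) : AntitoneOn (rr f) (Ioo (0:ℝ) 1) :=
  fun _ ha _ hb hab => (rr_le_iff hf hb _).2
    (((rr_le_iff hf ha _).1 le_rfl).trans (ENNReal.ofReal_le_ofReal hab))

lemma aemeasurable_rr {f : ℝ → ℝ} (hf : AEMeasurable f μ₀) : AEMeasurable (rr f) μ₀ :=
  aemeasurable_restrict_of_antitoneOn measurableSet_Ioo (antitoneOn_rr hf)

lemma measure_ofReal_lt {a : ℝ≥0∞} (ha : a ≤ 1) : μ₀ {t | ENNReal.ofReal t < a} = a := by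
  have h : {t | ENNReal.ofReal t < a} ∩ Ioo (0:ℝ) 1 = Ioo 0 a.toReal := by
    have ha' : a ≠ ∞ := (ha.trans_lt ENNReal.one_lt_top).ne
    have ha1 : a.toReal ≤ 1 := ENNReal.toReal_le_of_le_ofReal zero_le_one (by simpa using ha)
    ext t
    simp only [mem_inter_iff, mem_ofPred_eq, mem_Ioo]
    constructor
    · rintro ⟨h1, h2, -⟩
      exact ⟨h2, (ENNReal.ofReal_lt_iff_lt_toReal h2.le ha').1 h1⟩
    · rintro ⟨h1, h2⟩
      exact ⟨(ENNReal.ofReal_lt_iff_lt_toReal h1.le ha').2 h2, h1, h2.trans_le ha1⟩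
  rw [Measure.restrict_apply' measurableSet_Ioo, h, Real.volume_Ioo, sub_zero,
    ENNReal.ofReal_toReal (ha.trans_lt ENNReal.one_lt_top).ne]

lemma measure_lt_rr_inter {f g : ℝ → ℝ} (hf : AEMeasurable f μ₀) (hg : AEMeasurable g μ₀)
    (a b : ℝ) :
    μ₀ {t | a < rr f t ∧ b < rr g t} = min (μ₀ {u | a < f u}) (μ₀ {u | b < g u}) := by
  rw [← measure_ofReal_lt (a := min _ _) (min_le_of_left_le prob_le_one)]
  refine measure_congr ?_
  filter_upwards [ae_restrict_mem measurableSet_Ioo] with t ht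
  change (a < rr f t ∧ b < rr g t) = (ENNReal.ofReal t < min _ _)
  rw [lt_min_iff, lt_rr_iff hf ht, lt_rr_iff hg ht]

lemma identDistrib_rr {f : ℝ → ℝ} (hf : AEMeasurable f μ₀) : IdentDistrib (rr f) f μ₀ μ₀ := by
  refine ⟨aemeasurable_rr hf, hf, ?_⟩
  have := Measure.isProbabilityMeasure_map hf
  have := Measure.isProbabilityMeasure_map (aemeasurable_rr hf)
  refine Measure.ext_of_Iic _ _ fun s => ?_
  have h : Measure.map (rr f) μ₀ (Ioi s) = Measure.map f μ₀ (Ioi s) := by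
    rw [Measure.map_apply_of_aemeasurable hf measurableSet_Ioi,
      Measure.map_apply_of_aemeasurable (aemeasurable_rr hf) measurableSet_Ioi]
    have h := measure_lt_rr_inter hf hf s s
    simp only [and_self, min_self] at h
    exact h
  rw [← compl_Ioi, prob_compl_eq_one_sub measurableSet_Ioi,
    prob_compl_eq_one_sub measurableSet_Ioi, h]

lemma rr_congr_of_identDistrib {f g : ℝ → ℝ} (h : IdentDistrib f g μ₀ μ₀) : rr f = rr g := by
  funext t
  unfold rr
  simp_rw [volume_sep_eq_restrict]
  congr! 4 with s
  exact h.measure_mem_eq measurableSet_Ioi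

lemma rr_abs_rr {f : ℝ → ℝ} (hf : AEMeasurable f μ₀) :
    rr (fun u => |rr f u|) = rr (fun u => |f u|) :=
  rr_congr_of_identDistrib ((identDistrib_rr hf).comp (u := fun x => |x|) measurable_norm)

lemma rr_comp_max_add {f : ℝ → ℝ} (hf : AEMeasurable f μ₀) (N : ℝ) {t : ℝ}
    (ht : t ∈ Ioo (0:ℝ) 1) :
    rr (fun u => max (f u) (-N) + N) t = max (rr f t) (-N) + N := by
  refine eq_of_forall_ge_iff fun s => ?_
  rw [rr_le_iff (by fun_prop) ht, ← le_sub_iff_add_le, max_le_iff, rr_le_iff hf ht]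
  simp_rw [← sub_lt_iff_lt_add, lt_max_iff]
  by_cases hs : -N ≤ s - N
  · simp [hs, not_lt.2 hs]
  · simp [hs, not_le.1 hs, ht.2]

lemma lintegral_mul_eq_lintegral_measure_lt {α : Type*} [MeasurableSpace α] {μ : Measure α}
    {f g : α → ℝ} (hf : AEMeasurable f μ) (hg : AEMeasurable g μ) (hf0 : 0 ≤ᵐ[μ] f)
    (hg0 : 0 ≤ᵐ[μ] g) [SFinite μ] :
    ∫⁻ x, ENNReal.ofReal (f x) * ENNReal.ofReal (g x) ∂μ =
      ∫⁻ s in Ioi (0:ℝ), ∫⁻ t in Ioi (0:ℝ), μ {x | s < f x ∧ t < g x} := by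
  have hac := withDensity_absolutelyContinuous μ (fun x => ENNReal.ofReal (g x))
  have h1 := lintegral_eq_lintegral_meas_lt (μ.withDensity fun x => ENNReal.ofReal (g x))
    (hac.ae_le hf0) (hf.mono_ac hac)
  rw [lintegral_withDensity_eq_lintegral_mul₀ hg.ennreal_ofReal hf.ennreal_ofReal] at h1
  simp_rw [mul_comm (ENNReal.ofReal (f _))]
  refine h1.trans (lintegral_congr fun s => ?_)
  rw [withDensity_apply',
    lintegral_eq_lintegral_meas_lt _ (ae_restrict_of_ae hg0) hg.restrict]
  refine lintegral_congr fun t => ?_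
  rw [Measure.restrict_apply₀ (nullMeasurableSet_lt aemeasurable_const hg.restrict), inter_comm]
  rfl

lemma lintegral_mul_le_lintegral_rr {f g : ℝ → ℝ} (hf : AEMeasurable f μ₀)
    (hg : AEMeasurable g μ₀) (hf0 : 0 ≤ f) (hg0 : 0 ≤ g) :
    ∫⁻ x, ENNReal.ofReal (f x) * ENNReal.ofReal (g x) ∂μ₀ ≤
      ∫⁻ t, ENNReal.ofReal (rr f t) * ENNReal.ofReal (rr g t) ∂μ₀ := by
  have h0 : ∀ {f : ℝ → ℝ}, AEMeasurable f μ₀ → 0 ≤ f → 0 ≤ᵐ[μ₀] rr f := fun hf hf0 =>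
    (identDistrib_rr hf).symm.ae_snd measurableSet_Ici (ae_of_all _ hf0)
  rw [lintegral_mul_eq_lintegral_measure_lt hf hg (ae_of_all _ hf0) (ae_of_all _ hg0),
    lintegral_mul_eq_lintegral_measure_lt (aemeasurable_rr hf) (aemeasurable_rr hg) (h0 hf hf0)
      (h0 hg hg0)]
  refine lintegral_mono fun s => lintegral_mono fun t => ?_
  rw [measure_lt_rr_inter hf hg]
  exact le_min (measure_mono fun _ h => h.1) (measure_mono fun _ h => h.2)

lemma integrable_mul_of_integrable_rr_abs {f g : ℝ → ℝ} (hf : AEMeasurable f μ₀)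
    (hg : AEMeasurable g μ₀)
    (h : Integrable (fun t => rr (fun u => |f u|) t * rr (fun u => |g u|) t) μ₀) :
    Integrable (fun u => f u * g u) μ₀ := by
  have hf' : AEMeasurable (fun u => |f u|) μ₀ := by fun_prop
  have hg' : AEMeasurable (fun u => |g u|) μ₀ := by fun_prop
  refine ⟨(hf.mul hg).aestronglyMeasurable, ?_⟩
  refine lt_of_le_of_lt ?_ h.2
  have := lintegral_mul_le_lintegral_rr hf' hg' (fun _ => abs_nonneg _) (fun _ => abs_nonneg _)
  refine le_trans (le_of_eq ?_) (this.trans ?_)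
  · refine lintegral_congr fun u => ?_
    rw [enorm_mul, Real.enorm_eq_ofReal_abs, Real.enorm_eq_ofReal_abs]
  · refine lintegral_mono fun u => ?_
    rw [enorm_mul]
    gcongr <;> exact Real.ofReal_le_enorm _

lemma integrable_rr_mul_rr {f g : ℝ → ℝ} (hf : AEMeasurable f μ₀) (hg : AEMeasurable g μ₀)
    (h : Integrable (fun t => rr (fun u => |f u|) t * rr (fun u => |g u|) t) μ₀) :
    Integrable (fun t => rr f t * rr g t) μ₀ := by
  refine integrable_mul_of_integrable_rr_abs (aemeasurable_rr hf) (aemeasurable_rr hg) ?_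
  rwa [rr_abs_rr hf, rr_abs_rr hg]

lemma abs_max_neg_le {N : ℝ} (hN : 0 ≤ N) (x : ℝ) : |max x (-N)| ≤ |x| := by
  rcases le_total x (-N) with h | h
  · rw [max_eq_right h, abs_of_nonpos (by linarith), abs_of_nonpos (by linarith)]
    linarith
  · rw [max_eq_left h]

lemma integrable_max_neg {f : ℝ → ℝ} (hf : Integrable f μ₀) {N : ℝ} (hN : 0 ≤ N) :
    Integrable (fun u => max (f u) (-N)) μ₀ :=
  hf.mono (hf.aemeasurable.max aemeasurable_const).aestronglyMeasurable
    (ae_of_all _ fun _ => abs_max_neg_le hN _)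

lemma integrable_max_neg_mul {f g : ℝ → ℝ} (hf : AEMeasurable f μ₀) (hg : AEMeasurable g μ₀)
    (hfg : Integrable (fun u => f u * g u) μ₀) {N : ℝ} (hN : 0 ≤ N) :
    Integrable (fun u => max (f u) (-N) * max (g u) (-N)) μ₀ := by
  refine hfg.mono (AEMeasurable.aestronglyMeasurable (by fun_prop)) (ae_of_all _ fun u => ?_)
  simp only [Real.norm_eq_abs, abs_mul]
  exact mul_le_mul (abs_max_neg_le hN _) (abs_max_neg_le hN _) (abs_nonneg _) (abs_nonneg _)

lemma tendsto_integral_max_neg_mul {f g : ℝ → ℝ} (hf : AEMeasurable f μ₀)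
    (hg : AEMeasurable g μ₀) (hfg : Integrable (fun u => f u * g u) μ₀) :
    Tendsto (fun n : ℕ => ∫ u, max (f u) (-(n:ℝ)) * max (g u) (-(n:ℝ)) ∂μ₀) atTop
      (𝓝 (∫ u, f u * g u ∂μ₀)) := by
  refine tendsto_integral_of_dominated_convergence (fun u => |f u * g u|)
    (fun n => (integrable_max_neg_mul hf hg hfg n.cast_nonneg).1) hfg.abs
    (fun n => ae_of_all _ fun u => ?_) (ae_of_all _ fun u => ?_)
  · simp only [Real.norm_eq_abs, abs_mul]
    exact mul_le_mul (abs_max_neg_le n.cast_nonneg _) (abs_max_neg_le n.cast_nonneg _)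
      (abs_nonneg _) (abs_nonneg _)
  · have h : ∀ x : ℝ, ∀ᶠ n : ℕ in atTop, max x (-(n:ℝ)) = x := fun x => by
      filter_upwards [tendsto_natCast_atTop_atTop.eventually_ge_atTop (-x)] with n hn
      exact max_eq_left (by linarith)
    refine tendsto_const_nhds.congr' ?_
    filter_upwards [h (f u), h (g u)] with n h1 h2
    rw [h1, h2]

lemma integral_add_const_mul_add_const {f g : ℝ → ℝ} (hf : Integrable f μ₀)
    (hg : Integrable g μ₀) (hfg : Integrable (fun u => f u * g u) μ₀) (N : ℝ) :
    Integrable (fun u => (f u + N) * (g u + N)) μ₀ ∧ ∫ u, (f u + N) * (g u + N) ∂μ₀ =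
      ∫ u, f u * g u ∂μ₀ + (N * ∫ u, f u ∂μ₀) + (N * ∫ u, g u ∂μ₀) + N * N := by
  have h : (fun u => (f u + N) * (g u + N)) =
      fun u => f u * g u + N * f u + N * g u + N * N := by
    funext u
    ring
  have h1 : Integrable (fun u => f u * g u + N * f u) μ₀ := hfg.add (hf.const_mul N)
  have h2 : Integrable (fun u => f u * g u + N * f u + N * g u) μ₀ := h1.add (hg.const_mul N)
  have h3 := integrable_const (μ := μ₀) (N * N)
  rw [h]
  refine ⟨h2.add h3, ?_⟩
  rw [integral_add h2 h3, integral_add h1 (hg.const_mul N), integral_add hfg (hf.const_mul N),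
    integral_const_mul, integral_const_mul]
  simp

lemma integral_max_neg_mul_le {f g : ℝ → ℝ} (hf : Integrable f μ₀) (hg : Integrable g μ₀)
    (hfg : Integrable (fun u => f u * g u) μ₀)
    (hFG : Integrable (fun u => rr f u * rr g u) μ₀) {N : ℝ} (hN : 0 ≤ N) :
    ∫ u, max (f u) (-N) * max (g u) (-N) ∂μ₀ ≤
      ∫ t, max (rr f t) (-N) * max (rr g t) (-N) ∂μ₀ := by
  have hfm := hf.aemeasurable
  have hgm := hg.aemeasurable
  have hF := (identDistrib_rr hfm).integrable_iff.2 hf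
  have hG := (identDistrib_rr hgm).integrable_iff.2 hg
  have hmax : Measurable fun x : ℝ => max x (-N) := by fun_prop
  have eF : ∫ t, max (rr f t) (-N) ∂μ₀ = ∫ u, max (f u) (-N) ∂μ₀ :=
    ((identDistrib_rr hfm).comp hmax).integral_eq
  have eG : ∫ t, max (rr g t) (-N) ∂μ₀ = ∫ u, max (g u) (-N) ∂μ₀ :=
    ((identDistrib_rr hgm).comp hmax).integral_eq
  obtain ⟨i1, e1⟩ := integral_add_const_mul_add_const (integrable_max_neg hf hN)
    (integrable_max_neg hg hN) (integrable_max_neg_mul hfm hgm hfg hN) N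
  obtain ⟨i2, e2⟩ := integral_add_const_mul_add_const (integrable_max_neg hF hN)
    (integrable_max_neg hG hN)
    (integrable_max_neg_mul (aemeasurable_rr hfm) (aemeasurable_rr hgm) hFG hN) N
  have hpos : ∀ x : ℝ, 0 ≤ max x (-N) + N := fun x => by linarith [le_max_right x (-N)]
  have key := lintegral_mul_le_lintegral_rr (f := fun u => max (f u) (-N) + N)
    (g := fun u => max (g u) (-N) + N) (by fun_prop) (by fun_prop) (fun _ => hpos _)
    (fun _ => hpos _)
  have hrr : ∫⁻ t, ENNReal.ofReal (rr (fun u => max (f u) (-N) + N) t) *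
      ENNReal.ofReal (rr (fun u => max (g u) (-N) + N) t) ∂μ₀ =
      ∫⁻ t, ENNReal.ofReal ((max (rr f t) (-N) + N) * (max (rr g t) (-N) + N)) ∂μ₀ := by
    refine setLIntegral_congr_fun measurableSet_Ioo fun t ht => ?_
    rw [rr_comp_max_add hfm N ht, rr_comp_max_add hgm N ht, ENNReal.ofReal_mul (hpos _)]
  simp_rw [hrr, ← ENNReal.ofReal_mul (hpos _)] at key
  rw [← ofReal_integral_eq_lintegral_ofReal i1 (ae_of_all _ fun _ => mul_nonneg (hpos _) (hpos _)),
    ← ofReal_integral_eq_lintegral_ofReal i2 (ae_of_all _ fun _ => mul_nonneg (hpos _) (hpos _)),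
    ENNReal.ofReal_le_ofReal_iff (integral_nonneg fun _ => mul_nonneg (hpos _) (hpos _)),
    e1, e2, eF, eG] at key
  linarith

lemma integral_mul_le_integral_rr_mul_rr {f g : ℝ → ℝ} (hf : Integrable f μ₀)
    (hg : Integrable g μ₀)
    (h : Integrable (fun t => rr (fun u => |f u|) t * rr (fun u => |g u|) t) μ₀) :
    ∫ u, f u * g u ∂μ₀ ≤ ∫ t, rr f t * rr g t ∂μ₀ := by
  have hfm := hf.aemeasurable
  have hgm := hg.aemeasurable
  have hfg := integrable_mul_of_integrable_rr_abs hfm hgm h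
  have hFG := integrable_rr_mul_rr hfm hgm h
  exact le_of_tendsto_of_tendsto' (tendsto_integral_max_neg_mul hfm hgm hfg)
    (tendsto_integral_max_neg_mul (aemeasurable_rr hfm) (aemeasurable_rr hgm) hFG)
    fun n => integral_max_neg_mul_le hf hg hfg hFG n.cast_nonneg

lemma bddBelow_rr_image {g : ℝ → ℝ} (hg : AEMeasurable g μ₀) {t : ℝ} (ht : t ∈ Ioo (0:ℝ) 1) :
    BddBelow (rr g '' Ioo (0:ℝ) (1 - t)) := by
  refine ⟨rr g (1 - t), ?_⟩
  rintro _ ⟨x, hx, rfl⟩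
  exact antitoneOn_rr hg ⟨hx.1, by linarith [hx.2, ht.1]⟩
    ⟨by linarith [ht.2], by linarith [ht.1]⟩ hx.2.le

lemma rrCheck_le_of_mem {g : ℝ → ℝ} (hg : AEMeasurable g μ₀) {t x : ℝ} (ht : t ∈ Ioo (0:ℝ) 1)
    (hx : x ∈ Ioo (0:ℝ) (1 - t)) : rrCheck g t ≤ rr g x :=
  csInf_le (bddBelow_rr_image hg ht) (mem_image_of_mem _ hx)

lemma rrCheck_lt_iff {g : ℝ → ℝ} (hg : AEMeasurable g μ₀) {t : ℝ} (ht : t ∈ Ioo (0:ℝ) 1)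
    (a : ℝ) : rrCheck g t < a ↔ ∃ x ∈ Ioo (0:ℝ) (1 - t), rr g x < a := by
  rw [rrCheck, csInf_lt_iff (bddBelow_rr_image hg ht)
    ((nonempty_Ioo.2 (by linarith [ht.2])).image _), exists_mem_image]

lemma rr_neg {g : ℝ → ℝ} (hg : AEMeasurable g μ₀) {t : ℝ} (ht : t ∈ Ioo (0:ℝ) 1) :
    rr (fun u => -g u) t = -rrCheck g t := by
  have hgn : AEMeasurable (fun u => -g u) μ₀ := hg.neg
  have hcompl : ∀ a, μ₀ {u | -a < -g u} = 1 - μ₀ {u | a ≤ g u} := fun a => by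
    rw [← prob_compl_eq_one_sub₀ (nullMeasurableSet_le aemeasurable_const hg)]
    congr 1
    ext u
    simp
  have hsub : 1 - ENNReal.ofReal t = ENNReal.ofReal (1 - t) := by
    rw [ENNReal.ofReal_sub _ ht.1.le, ENNReal.ofReal_one]
  have hlt : ∀ a, rr (fun u => -g u) t ≤ -a ↔ ENNReal.ofReal (1 - t) ≤ μ₀ {u | a ≤ g u} := by
    intro a
    rw [rr_le_iff hgn ht, hcompl, ← hsub, tsub_le_iff_right, tsub_le_iff_left]
  have hmono : ∀ {a b}, b < a → μ₀ {u | a ≤ g u} ≤ μ₀ {u | b < g u} := fun hab =>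
    measure_mono fun _ hu => hab.trans_le hu
  refine le_antisymm ?_ ?_
  · refine le_of_forall_gt_imp_ge_of_dense fun b hb => ?_
    rw [← neg_neg b, hlt]
    refine le_trans ?_ (measure_mono fun u hu => le_of_lt (α := ℝ) hu)
    by_contra! h
    obtain ⟨y, hy1, hy2⟩ := exists_between h
    have hy : y ≠ ∞ := hy2.ne_top
    have hy0 : 0 < y.toReal := ENNReal.toReal_pos (pos_of_gt hy1).ne' hy
    have hyt : y.toReal < 1 - t := by
      rwa [← ENNReal.ofReal_toReal hy, ENNReal.ofReal_lt_ofReal_iff_of_nonneg hy0.le] at hy2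
    have hrr : rr g y.toReal ≤ -b := by
      rw [rr_le_iff hg ⟨hy0, by linarith [ht.1]⟩, ENNReal.ofReal_toReal hy]
      exact hy1.le
    exact absurd (rrCheck_le_of_mem hg ht ⟨hy0, hyt⟩) (by linarith)
  · refine le_of_forall_lt fun b hb => ?_
    obtain ⟨x, hx, hxb⟩ := (rrCheck_lt_iff hg ht (-b)).1 (by linarith)
    rw [← neg_neg b, ← not_le, hlt, not_le]
    refine ((hmono hxb).trans ((rr_le_iff hg ⟨hx.1, by linarith [hx.2, ht.1]⟩ _).1 le_rfl)).trans_lt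
      ((ENNReal.ofReal_lt_ofReal_iff_of_nonneg hx.1.le).2 hx.2)

theorem hardy_littlewood_inequalities (f g : ℝ → ℝ)
    (hf : IntegrableOn f (Ioo (0:ℝ) 1)) (hg : IntegrableOn g (Ioo (0:ℝ) 1))
    (hprod : IntegrableOn (fun t => rr (fun u => |f u|) t * rr (fun u => |g u|) t)
      (Ioo (0:ℝ) 1)) :
    IntegrableOn (fun u => f u * g u) (Ioo (0:ℝ) 1) ∧
      (∫ s in Ioo (0:ℝ) 1, rr f s * rrCheck g s) ≤ (∫ u in Ioo (0:ℝ) 1, f u * g u) ∧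
      (∫ u in Ioo (0:ℝ) 1, f u * g u) ≤ ∫ s in Ioo (0:ℝ) 1, rr f s * rr g s := by
  refine ⟨integrable_mul_of_integrable_rr_abs hf.aemeasurable hg.aemeasurable hprod, ?_,
    integral_mul_le_integral_rr_mul_rr hf hg hprod⟩
  have h := integral_mul_le_integral_rr_mul_rr hf (g := fun u => -g u) hg.neg
    (by simp only [abs_neg]; exact hprod)
  have hcheck : ∫ t in Ioo (0:ℝ) 1, rr f t * rr (fun u => -g u) t =
      ∫ t in Ioo (0:ℝ) 1, -(rr f t * rrCheck g t) :=
    setIntegral_congr_fun measurableSet_Ioo fun t ht => by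
      rw [rr_neg hg.aemeasurable ht, mul_neg]
  rw [hcheck, integral_neg] at h
  simp only [mul_neg, integral_neg] at h
  linarith
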